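/- arXiv:2504.17285 — 4 statements merged into one kernel-verified Lean document; each statement's English description precedes it below -/
import Mathlib

section
/- Let p, q, r ≥ 1 be real exponents. For all ε, δ, σ > 0 there exist positive constants C_ε, C_δ, C_σ (depending only on ε, δ, σ, p, q, r) and C > 0 (depending only on p, q, r) such that for every R > 0, every s, t with 3R/2 ≤ s < t ≤ 2R, every pair of smooth vector fields u, v : ℝ³ → ℝ³ and every smooth function θ : ℝ³ → ℝ, the quantity J₁ = (t−s)^{−2} ∫_{B_t∖B_s} (|u|² + |v|² + |θ − θ̄_R|²) dx satisfies J₁ ≤ ε‖u‖²_{L^6(B_t∖B_R)} + C_ε (t−s)^{−(6/p−1)} ‖u‖²_{L^p(B_{2R}∖B_R)} + C (t−s)^{−2} R^{3−6/p} ‖u‖²_{L^p(B_{2R}∖B_R)} + δ‖v‖²_{L^6(B_t∖B_R)} + C_δ (t−s)^{−(6/q−1)} ‖v‖²_{L^q(B_{2R}∖B_R)} + C (t−s)^{−2} R^{3−6/q} ‖v‖²_{L^q(B_{2R}∖B_R)} + σ‖θ − θ̄_R‖²_{L^6(B_t∖B_R)} + C_σ (t−s)^{−(6/r−1)} ‖θ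 − θ̄_R‖²_{L^r(B_{2R}∖B_R)} + C (t−s)^{−2} R^{3−6/r} ‖θ − θ̄_R‖²_{L^r(B_{2R}∖B_R)} (the inequality interpreted in the extended nonnegative reals). -/
/-!
The three fields are estimated separately by the same one-function inequality (`one_field`): with
`τ = t - s`,
`τ⁻² ∫_{B_t∖B_s} |f|² ≤ ε ‖f‖₆² + C_ε τ^{-(6/p-1)} ‖f‖_p² + C τ⁻² R^{3-6/p} ‖f‖_p²`.

* For `p ≥ 2`, Hölder's inequality on the annulus, whose volume is at most a multiple of `R³`, gives
  the last term alone (`two_le_case`).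
* For `1 ≤ p < 2`, put `a = 2p/(6-p) ∈ (0,1)`. Interpolation of `L²` between `L^p` and `L⁶` gives
  `∫ |f|² ≤ (‖f‖_p²)^a (‖f‖₆²)^{1-a}`, and Young's inequality turns `τ⁻²` times this product into the
  first two terms, because `2/a = 6/p - 1` (`lt_two_case`).
-/

open MeasureTheory Metric Filter
open scoped ENNReal NNReal

noncomputable section

/-- Euclidean `ℝ³`. -/
abbrev E3 := EuclideanSpace ℝ (Fin 3)

/-- The annulus `B_{2R} \ B_R` centered at the origin. -/
def Ann (R : ℝ) : Set E3 := ball (0 : E3) (2 * R) \ ball (0 : E3) R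

/-- Mean value of `θ` over the annulus `B_{2R} \ B_R`. -/
def thetaBar (θ : E3 → ℝ) (R : ℝ) : ℝ := ⨍ x in Ann R, θ x

/-- `L^p` norm (with real exponent `p`) of `f` over the set `s`, valued in `ℝ≥0∞`. -/
def LpS {F : Type*} [NormedAddCommGroup F] (f : E3 → F) (p : ℝ) (s : Set E3) : ℝ≥0∞ :=
  eLpNorm f (ENNReal.ofReal p) (volume.restrict s)

/-- Unnormalised Young inequality: both bases are bounded by `A + B`. -/
lemma young_add (A B : ℝ≥0∞) {a b : ℝ} (ha : 0 ≤ a) (hb : 0 ≤ b) (hab : a + b = 1) :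
    A ^ a * B ^ b ≤ A + B := by
  calc A ^ a * B ^ b ≤ (A + B) ^ a * (A + B) ^ b := by
        gcongr
        · exact le_self_add
        · exact le_add_self
    _ = A + B := by
        rw [← ENNReal.rpow_add_of_nonneg _ _ ha hb, hab, ENNReal.rpow_one]

section OneField

variable {F : Type*} [NormedAddCommGroup F]

lemma LpS_sq_eq (f : E3 → F) {p : ℝ} (hp : 0 < p) (S : Set E3) :
    LpS f p S ^ 2 = (∫⁻ x in S, ‖f x‖ₑ ^ p) ^ (2 / p) := by
  rw [LpS, eLpNorm_eq_lintegral_rpow_enorm_toReal (by simpa using hp) ENNReal.ofReal_ne_top,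
    ENNReal.toReal_ofReal hp.le, ← ENNReal.rpow_natCast, ← ENNReal.rpow_mul]
  congr 1
  push_cast
  ring

lemma LpS_mono (f : E3 → F) (p : ℝ) {S T : Set E3} (h : S ⊆ T) : LpS f p S ≤ LpS f p T :=
  eLpNorm_mono_measure _ (Measure.restrict_mono h le_rfl)

/-- Interpolation of `L²` between `L^p` and `L⁶`, followed by Young's inequality. -/
lemma lt_two_case {p : ℝ} (hp : 1 ≤ p) (hp2 : p < 2) {ε : ℝ} (hε : 0 < ε) :
    ∃ K : ℝ, 0 < K ∧ ∀ τ : ℝ, 0 < τ → ∀ S : Set E3, ∀ f : E3 → F, Continuous f →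
      ENNReal.ofReal (τ ^ (-2 : ℝ)) * ∫⁻ x in S, ‖f x‖ₑ ^ 2
        ≤ ENNReal.ofReal ε * LpS f 6 S ^ 2
          + ENNReal.ofReal K * ENNReal.ofReal (τ ^ (-(6 / p - 1))) * LpS f p S ^ 2 := by
  have h6 : 0 < 6 - p := by linarith
  have hp0 : 0 < p := by linarith
  set a : ℝ := 2 * p / (6 - p) with ha
  set b : ℝ := (6 - 3 * p) / (6 - p) with hb
  have ha0 : 0 < a := by positivity
  have hb0 : 0 < b := div_pos (by linarith) h6
  have hab : a + b = 1 := by rw [ha, hb]; field_simp; ring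
  -- `K` is chosen so that `(K τ^{-2/a})^a ε^b = τ⁻²`.
  refine ⟨ε ^ (-(b / a)), by positivity, fun τ hτ S f hf => ?_⟩
  have hint : ∫⁻ x in S, ‖f x‖ₑ ^ 2 ≤ (LpS f p S ^ 2) ^ a * (LpS f 6 S ^ 2) ^ b := by
    have hm := hf.enorm.measurable
    have key := ENNReal.lintegral_mul_norm_pow_le (μ := volume.restrict S)
      (f := fun x => ‖f x‖ₑ ^ p) (g := fun x => ‖f x‖ₑ ^ (6 : ℝ))
      (hm.pow_const p).aemeasurable (hm.pow_const (6 : ℝ)).aemeasurable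
      (p := 4 / (6 - p)) (q := (2 - p) / (6 - p)) (by positivity)
      (div_nonneg (by linarith) h6.le) (by field_simp; ring)
    rw [LpS_sq_eq f hp0, LpS_sq_eq f (by norm_num : (0 : ℝ) < 6), ← ENNReal.rpow_mul,
      ← ENNReal.rpow_mul]
    have e1 : 2 / p * a = 4 / (6 - p) := by rw [ha]; field_simp; ring
    have e2 : 2 / 6 * b = (2 - p) / (6 - p) := by rw [hb]; field_simp; ring
    rw [e1, e2]
    refine le_trans (le_of_eq ?_) key
    refine lintegral_congr fun x => ?_
    rw [← ENNReal.rpow_mul, ← ENNReal.rpow_mul, ← ENNReal.rpow_add_of_nonneg _ _ (by positivity)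
      (mul_nonneg (by norm_num) (div_nonneg (by linarith) h6.le)), ← ENNReal.rpow_natCast]
    congr 1
    field_simp
    push_cast
    ring
  set X := LpS f p S ^ 2
  set Y := LpS f 6 S ^ 2
  have hK : ENNReal.ofReal (τ ^ (-2 : ℝ)) =
      (ENNReal.ofReal (ε ^ (-(b / a))) * ENNReal.ofReal (τ ^ (-(6 / p - 1)))) ^ a
        * ENNReal.ofReal ε ^ b := by
    rw [← ENNReal.ofReal_mul (by positivity), ENNReal.ofReal_rpow_of_pos (by positivity),
      ENNReal.ofReal_rpow_of_pos hε, ← ENNReal.ofReal_mul (by positivity),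
      Real.mul_rpow (by positivity) (by positivity), ← Real.rpow_mul hε.le, ← Real.rpow_mul hτ.le]
    have e1 : -(b / a) * a = -b := by field_simp
    have e2 : -(6 / p - 1) * a = -2 := by rw [ha]; field_simp
    rw [e1, e2, mul_right_comm, ← Real.rpow_add hε, neg_add_cancel, Real.rpow_zero, one_mul]
  calc ENNReal.ofReal (τ ^ (-2 : ℝ)) * ∫⁻ x in S, ‖f x‖ₑ ^ 2
      ≤ ENNReal.ofReal (τ ^ (-2 : ℝ)) * (X ^ a * Y ^ b) := by gcongr
    _ = (ENNReal.ofReal (ε ^ (-(b / a))) * ENNReal.ofReal (τ ^ (-(6 / p - 1))) * X) ^ a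
          * (ENNReal.ofReal ε * Y) ^ b := by
        rw [hK, ENNReal.mul_rpow_of_nonneg _ X ha0.le, ENNReal.mul_rpow_of_nonneg _ Y hb0.le]
        ring
    _ ≤ _ := (young_add _ _ ha0.le hb0.le hab).trans_eq (add_comm _ _)

/-- Hölder's inequality on the annulus, using that its volume is at most `8 |B₁| R³`. -/
lemma two_le_case {p : ℝ} (hp2 : 2 ≤ p) :
    ∃ C : ℝ, 0 < C ∧ ∀ R : ℝ, 0 < R → ∀ S ⊆ Ann R, ∀ f : E3 → F, Continuous f →
      ∫⁻ x in S, ‖f x‖ₑ ^ 2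
        ≤ ENNReal.ofReal C * ENNReal.ofReal (R ^ (3 - 6 / p)) * LpS f p (Ann R) ^ 2 := by
  have hp0 : 0 < p := by linarith
  have hV : volume (ball (0 : E3) 1) ≠ ∞ := measure_ball_lt_top.ne
  have hV0 : 0 < (volume (ball (0 : E3) 1)).toReal :=
    ENNReal.toReal_pos (measure_ball_pos _ _ one_pos).ne' hV
  set V := (volume (ball (0 : E3) 1)).toReal with hVdef
  refine ⟨(8 * V) ^ (1 - 2 / p), by positivity, fun R hR S hS f hf => ?_⟩
  have hvol : volume (Ann R) ≤ ENNReal.ofReal (8 * V * R ^ 3) := by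
    refine (measure_mono Set.sdiff_subset).trans (le_of_eq ?_)
    rw [Measure.addHaar_ball_of_pos _ _ (by positivity), ← ENNReal.ofReal_toReal hV,
      ← ENNReal.ofReal_mul (by positivity), ← hVdef]
    congr 1
    simp
    ring
  have he : 0 ≤ 1 / 2 - 1 / p := by
    rw [sub_nonneg]
    exact one_div_le_one_div_of_le (by norm_num) hp2
  have h2 : ∫⁻ x in S, ‖f x‖ₑ ^ 2 ≤ LpS f 2 (Ann R) ^ 2 := by
    rw [LpS_sq_eq f two_pos, div_self two_ne_zero, ENNReal.rpow_one]
    simp only [ENNReal.rpow_two]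
    exact lintegral_mono_set hS
  have hH : LpS f 2 (Ann R)
      ≤ LpS f p (Ann R) * ENNReal.ofReal (8 * V * R ^ 3) ^ (1 / 2 - 1 / p) := by
    have := eLpNorm_le_eLpNorm_mul_rpow_measure_univ (μ := volume.restrict (Ann R))
      (ENNReal.ofReal_le_ofReal hp2) hf.aestronglyMeasurable
    rw [ENNReal.toReal_ofReal hp0.le, ENNReal.toReal_ofReal two_pos.le,
      Measure.restrict_apply_univ] at this
    refine this.trans ?_
    unfold LpS
    gcongr
  calc ∫⁻ x in S, ‖f x‖ₑ ^ 2 ≤ LpS f 2 (Ann R) ^ 2 := h2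
    _ ≤ (LpS f p (Ann R) * ENNReal.ofReal (8 * V * R ^ 3) ^ (1 / 2 - 1 / p)) ^ 2 := by gcongr
    _ = _ := by
      rw [mul_pow, mul_comm]
      congr 1
      rw [← ENNReal.ofReal_mul (by positivity), ← ENNReal.rpow_natCast, ← ENNReal.rpow_mul,
        ENNReal.ofReal_rpow_of_pos (by positivity), Real.mul_rpow (by positivity) (by positivity),
        ← Real.rpow_natCast R 3, ← Real.rpow_mul hR.le]
      congr 3
      · push_cast; ring
      · push_cast; ring

/-- The estimate for one field; a single constant `C` serves every `ε`. -/
lemma one_field (F : Type*) [NormedAddCommGroup F] {p : ℝ} (hp : 1 ≤ p) :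
    ∃ C : ℝ, 0 < C ∧ ∀ ε : ℝ, 0 < ε → ∃ K : ℝ, 0 < K ∧
      ∀ R s t : ℝ, 0 < R → 3 * R / 2 ≤ s → s < t → t ≤ 2 * R →
      ∀ f : E3 → F, Continuous f →
        ENNReal.ofReal ((t - s) ^ (-2 : ℝ)) *
          ∫⁻ x in ball (0 : E3) t \ ball (0 : E3) s, ‖f x‖ₑ ^ 2
        ≤ ENNReal.ofReal ε * LpS f 6 (ball (0 : E3) t \ ball (0 : E3) R) ^ 2
          + ENNReal.ofReal K * ENNReal.ofReal ((t - s) ^ (-(6 / p - 1))) * LpS f p (Ann R) ^ 2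
          + ENNReal.ofReal C * ENNReal.ofReal ((t - s) ^ (-2 : ℝ)) *
              ENNReal.ofReal (R ^ (3 - 6 / p)) * LpS f p (Ann R) ^ 2 := by
  have hsub1 : ∀ {R s t : ℝ}, 0 < R → 3 * R / 2 ≤ s →
      ball (0 : E3) t \ ball (0 : E3) s ⊆ ball (0 : E3) t \ ball (0 : E3) R := fun hR hs =>
    Set.sdiff_subset_sdiff_right (ball_subset_ball (by linarith))
  have hsub2 : ∀ {R s t : ℝ}, 0 < R → 3 * R / 2 ≤ s → t ≤ 2 * R →
      ball (0 : E3) t \ ball (0 : E3) s ⊆ Ann R := fun hR hs ht =>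
    Set.sdiff_subset_sdiff (ball_subset_ball ht) (ball_subset_ball (by linarith))
  rcases lt_or_ge p 2 with h | h
  · refine ⟨1, one_pos, fun ε hε => ?_⟩
    obtain ⟨K, hK, H⟩ := lt_two_case (F := F) hp h hε
    refine ⟨K, hK, fun R s t hR hs hst ht f hf => ?_⟩
    refine (H (t - s) (sub_pos.2 hst) _ f hf).trans (le_trans ?_ le_self_add)
    gcongr
    · exact LpS_mono f 6 (hsub1 hR hs)
    · exact LpS_mono f p (hsub2 hR hs ht)
  · obtain ⟨C, hC, H⟩ := two_le_case (F := F) h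
    refine ⟨C, hC, fun ε hε => ⟨1, one_pos, fun R s t hR hs hst ht f hf => ?_⟩⟩
    refine le_trans ?_ le_add_self
    calc _ ≤ ENNReal.ofReal ((t - s) ^ (-2 : ℝ)) *
          (ENNReal.ofReal C * ENNReal.ofReal (R ^ (3 - 6 / p)) * LpS f p (Ann R) ^ 2) := by
          gcongr
          exact H R hR _ (hsub2 hR hs ht) f hf
      _ = _ := by ring

end OneField

theorem J1_estimate_i (p q r : ℝ) (hp : 1 ≤ p) (hq : 1 ≤ q) (hr : 1 ≤ r) :
    ∃ C : ℝ, 0 < C ∧ ∀ ε : ℝ, 0 < ε → ∀ δ : ℝ, 0 < δ → ∀ σ : ℝ, 0 < σ →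
      ∃ Cε : ℝ, 0 < Cε ∧ ∃ Cδ : ℝ, 0 < Cδ ∧ ∃ Cσ : ℝ, 0 < Cσ ∧
      ∀ R s t : ℝ, 0 < R → 3 * R / 2 ≤ s → s < t → t ≤ 2 * R →
      ∀ u v : E3 → E3, ∀ θ : E3 → ℝ,
        ContDiff ℝ (⊤ : ℕ∞) u → ContDiff ℝ (⊤ : ℕ∞) v → ContDiff ℝ (⊤ : ℕ∞) θ →
        ENNReal.ofReal ((t - s) ^ (-2 : ℝ)) *
          ∫⁻ x in ball (0 : E3) t \ ball (0 : E3) s,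
            ENNReal.ofReal (‖u x‖ ^ 2 + ‖v x‖ ^ 2 + (θ x - thetaBar θ R) ^ 2)
        ≤ ENNReal.ofReal ε * LpS u 6 (ball (0 : E3) t \ ball (0 : E3) R) ^ 2
          + ENNReal.ofReal Cε * ENNReal.ofReal ((t - s) ^ (-(6 / p - 1))) * LpS u p (Ann R) ^ 2
          + ENNReal.ofReal C * ENNReal.ofReal ((t - s) ^ (-2 : ℝ)) *
              ENNReal.ofReal (R ^ (3 - 6 / p)) * LpS u p (Ann R) ^ 2
          + ENNReal.ofReal δ * LpS v 6 (ball (0 : E3) t \ ball (0 : E3) R) ^ 2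
          + ENNReal.ofReal Cδ * ENNReal.ofReal ((t - s) ^ (-(6 / q - 1))) * LpS v q (Ann R) ^ 2
          + ENNReal.ofReal C * ENNReal.ofReal ((t - s) ^ (-2 : ℝ)) *
              ENNReal.ofReal (R ^ (3 - 6 / q)) * LpS v q (Ann R) ^ 2
          + ENNReal.ofReal σ * LpS (fun x => θ x - thetaBar θ R) 6 (ball (0 : E3) t \ ball (0 : E3) R) ^ 2
          + ENNReal.ofReal Cσ * ENNReal.ofReal ((t - s) ^ (-(6 / r - 1))) *
              LpS (fun x => θ x - thetaBar θ R) r (Ann R) ^ 2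
          + ENNReal.ofReal C * ENNReal.ofReal ((t - s) ^ (-2 : ℝ)) *
              ENNReal.ofReal (R ^ (3 - 6 / r)) * LpS (fun x => θ x - thetaBar θ R) r (Ann R) ^ 2 := by
  obtain ⟨C1, h1, H1⟩ := one_field E3 hp
  obtain ⟨C2, h2, H2⟩ := one_field E3 hq
  obtain ⟨C3, h3, H3⟩ := one_field ℝ hr
  refine ⟨C1 + C2 + C3, by positivity, fun ε hε δ hδ σ hσ => ?_⟩
  obtain ⟨K1, hK1, H1⟩ := H1 ε hε
  obtain ⟨K2, hK2, H2⟩ := H2 δ hδ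
  obtain ⟨K3, hK3, H3⟩ := H3 σ hσ
  refine ⟨K1, hK1, K2, hK2, K3, hK3, fun R s t hR hs hst ht u v θ hu hv hθ => ?_⟩
  have hθc : Continuous fun x => θ x - thetaBar θ R := hθ.continuous.sub continuous_const
  have H1 := H1 R s t hR hs hst ht u hu.continuous
  have H2 := H2 R s t hR hs hst ht v hv.continuous
  have H3 := H3 R s t hR hs hst ht _ hθc
  have hsplit : ∀ x, ENNReal.ofReal (‖u x‖ ^ 2 + ‖v x‖ ^ 2 + (θ x - thetaBar θ R) ^ 2)
      = ‖u x‖ₑ ^ 2 + ‖v x‖ₑ ^ 2 + ‖θ x - thetaBar θ R‖ₑ ^ 2 := fun x => by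
    rw [ENNReal.ofReal_add (by positivity) (by positivity),
      ENNReal.ofReal_add (by positivity) (by positivity), ← sq_abs (θ x - thetaBar θ R),
      ← Real.norm_eq_abs]
    simp only [ENNReal.ofReal_pow (norm_nonneg _), ofReal_norm]
  simp only [hsplit]
  rw [lintegral_add_right _ (hθc.enorm.measurable.pow_const 2),
    lintegral_add_right _ (hv.continuous.enorm.measurable.pow_const 2), mul_add, mul_add]
  refine (add_le_add (add_le_add H1 H2) H3).trans ?_
  simp only [← add_assoc]
  gcongr <;> linarith
end
end

section
/- Let p ∈ (3/2, 3) be a real exponent. For every ε > 0 there exists a constant C_ε > 0 (depending only on ε and p) such that for every R > 0, every s, t with 3R/2 ≤ s < t ≤ 2R, and every smooth vector field u : ℝ³ → ℝ³, the quantity J₂ = (t−s)^{−1} ∫_{B_t∖B_R} |u|³ dx satisfies J₂ ≤ ε ‖u‖²_{L^6(B_t∖B_R)} + C_ε (t−s)^{−(6−p)/(2p−3)} ‖u‖_{L^p(B_{2R}∖B_R)}^{3p/(2p−3)} (the inequality interpreted in the extended nonnegative reals). -/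
/-!
Since `3` lies strictly between `p` and `6`, with `3 = p · 3/(6-p) + 6 · (3-p)/(6-p)`, Hölder's
inequality bounds `∫ |u|³` by `(∫ |u|^p)^(3/(6-p)) (∫ |u|⁶)^((3-p)/(6-p))`
(`lintegral_cube_le_interpolation`). The second factor is `(‖u‖²_{L⁶})^(1/r)` with
`r = (6-p)/(3(3-p))`, and `r > 1` exactly because `p > 3/2`. The conjugate exponent of `r` is
`q = (6-p)/(2p-3)`, so Young's inequality with a small weight on the `L⁶` factor
(`mul_le_weighted_young`) gives the claim with `C_ε = (ε^(1/r))^(-q)`. Finally the `L^p` norm over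
`B_t ∖ B_R` is at most the one over `B_{2R} ∖ B_R`.
-/

open MeasureTheory Metric Filter
open scoped ENNReal NNReal

noncomputable section

/-- Interpolation of `L³` between `L^p` and `L⁶`, written in terms of integrals. -/
lemma lintegral_cube_le_interpolation {α : Type*} [MeasurableSpace α] (μ : Measure α)
    {f : α → ℝ≥0∞} (hf : AEMeasurable f μ) {p : ℝ} (hp0 : 0 < p) (hp3 : p < 3) :
    ∫⁻ x, f x ^ (3 : ℝ) ∂μ ≤
      (∫⁻ x, f x ^ p ∂μ) ^ (3 / (6 - p)) * (∫⁻ x, f x ^ (6 : ℝ) ∂μ) ^ ((3 - p) / (6 - p)) := by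
  have h6 : 0 < 6 - p := by linarith
  have h3 : 0 < 3 - p := by linarith
  have key := ENNReal.lintegral_mul_norm_pow_le (μ := μ) (hf.pow_const p) (hf.pow_const (6 : ℝ))
    (p := 3 / (6 - p)) (q := (3 - p) / (6 - p)) (by positivity) (by positivity)
    (by field_simp; ring)
  refine le_trans (le_of_eq ?_) key
  refine lintegral_congr fun x => ?_
  rw [← ENNReal.rpow_mul, ← ENNReal.rpow_mul,
    ← ENNReal.rpow_add_of_nonneg _ _ (by positivity) (by positivity)]
  congr 1
  field_simp
  ring

/-- Young's inequality with weight `ε` on the first factor. The constants `1/r` and `1/q` are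
bounded by `1`. -/
lemma mul_le_weighted_young {r q ε : ℝ} (hrq : r.HolderConjugate q) (hε : 0 < ε)
    (a b : ℝ≥0∞) :
    a * b ≤ ENNReal.ofReal ε * a ^ r + ENNReal.ofReal ((ε ^ (1 / r)) ^ (-q)) * b ^ q := by
  have hδ : 0 < ε ^ (1 / r) := Real.rpow_pos_of_pos hε _
  set δ := ε ^ (1 / r) with hδ_def
  have hδr : δ ^ r = ε := by
    rw [hδ_def, ← Real.rpow_mul hε.le, one_div_mul_cancel hrq.ne_zero, Real.rpow_one]
  have hab : a * b = (ENNReal.ofReal δ * a) * (ENNReal.ofReal δ⁻¹ * b) := by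
    have h1 : ENNReal.ofReal δ * ENNReal.ofReal δ⁻¹ = 1 := by
      rw [← ENNReal.ofReal_mul hδ.le, mul_inv_cancel₀ hδ.ne', ENNReal.ofReal_one]
    rw [mul_mul_mul_comm, h1, one_mul]
  have hdiv : ∀ (c : ℝ≥0∞) {z : ℝ}, 1 < z → c / ENNReal.ofReal z ≤ c := fun c z hz =>
    ENNReal.div_le_of_le_mul (le_mul_of_one_le_right' (ENNReal.one_le_ofReal.2 hz.le))
  calc a * b = (ENNReal.ofReal δ * a) * (ENNReal.ofReal δ⁻¹ * b) := hab
    _ ≤ _ := ENNReal.young_inequality _ _ hrq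
    _ ≤ (ENNReal.ofReal δ * a) ^ r + (ENNReal.ofReal δ⁻¹ * b) ^ q :=
        add_le_add (hdiv _ hrq.lt) (hdiv _ hrq.symm.lt)
    _ = _ := by
        rw [ENNReal.mul_rpow_of_nonneg _ _ hrq.nonneg, ENNReal.mul_rpow_of_nonneg _ _
          hrq.symm.nonneg, ENNReal.ofReal_rpow_of_pos hδ, hδr,
          ENNReal.ofReal_rpow_of_pos (inv_pos.2 hδ), Real.inv_rpow hδ.le, Real.rpow_neg hδ.le]

lemma LpS_eq_lintegral {F : Type*} [NormedAddCommGroup F] (f : E3 → F) {p : ℝ} (hp : 0 < p)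
    (s : Set E3) : LpS f p s = (∫⁻ x in s, ‖f x‖ₑ ^ p) ^ (1 / p) := by
  rw [LpS, eLpNorm_eq_lintegral_rpow_enorm_toReal (by simpa using hp) ENNReal.ofReal_ne_top,
    ENNReal.toReal_ofReal hp.le]

theorem J2_estimate_iii (p : ℝ) (hp : 3 / 2 < p ∧ p < 3) :
    ∀ ε : ℝ, 0 < ε → ∃ Cε : ℝ, 0 < Cε ∧
      ∀ R s t : ℝ, 0 < R → 3 * R / 2 ≤ s → s < t → t ≤ 2 * R →
      ∀ u : E3 → E3, ContDiff ℝ (⊤ : ℕ∞) u →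
        ENNReal.ofReal ((t - s)⁻¹) *
          ∫⁻ x in ball (0 : E3) t \ ball (0 : E3) R, ENNReal.ofReal (‖u x‖ ^ 3)
        ≤ ENNReal.ofReal ε * LpS u 6 (ball (0 : E3) t \ ball (0 : E3) R) ^ 2
          + ENNReal.ofReal Cε * ENNReal.ofReal ((t - s) ^ (-((6 - p) / (2 * p - 3)))) *
              LpS u p (Ann R) ^ (3 * p / (2 * p - 3)) := by
  obtain ⟨hp1, hp3⟩ := hp
  intro ε hε
  have h0 : 0 < p := by linarith
  have h6 : 0 < 6 - p := by linarith
  have h3 : 0 < 3 - p := by linarith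
  have h2 : 0 < 2 * p - 3 := by linarith
  have hrq : ((6 - p) / (3 * (3 - p))).HolderConjugate ((6 - p) / (2 * p - 3)) := by
    rw [Real.holderConjugate_iff]
    constructor
    · rw [one_lt_div (by positivity)]
      linarith
    · rw [inv_div, inv_div]
      field_simp
      ring
  refine ⟨(ε ^ (1 / ((6 - p) / (3 * (3 - p))))) ^ (-((6 - p) / (2 * p - 3))), by positivity, ?_⟩
  intro R s t hR hs hst ht u hu
  have hτ : 0 < t - s := by linarith
  set S : Set E3 := ball (0 : E3) t \ ball (0 : E3) R with hS
  have hsub : S ⊆ Ann R := Set.sdiff_subset_sdiff_left (ball_subset_ball ht)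
  have hLp : LpS u p S ≤ LpS u p (Ann R) :=
    eLpNorm_mono_measure _ (Measure.restrict_mono hsub le_rfl)
  have hcube : ∫⁻ x in S, ENNReal.ofReal (‖u x‖ ^ 3) = ∫⁻ x in S, ‖u x‖ₑ ^ (3 : ℝ) := by
    refine lintegral_congr fun x => ?_
    rw [ENNReal.ofReal_pow (norm_nonneg _), ofReal_norm]
    norm_cast
  have hint := lintegral_cube_le_interpolation (volume.restrict S)
    (f := fun x => ‖u x‖ₑ) hu.continuous.enorm.measurable.aemeasurable h0 hp3
  have hX : ((∫⁻ x in S, ‖u x‖ₑ ^ (6 : ℝ)) ^ ((3 - p) / (6 - p))) ^ ((6 - p) / (3 * (3 - p)))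
      = LpS u 6 S ^ 2 := by
    rw [LpS_eq_lintegral u (by norm_num), ← ENNReal.rpow_natCast, ← ENNReal.rpow_mul,
      ← ENNReal.rpow_mul]
    congr 1
    push_cast
    field_simp
    norm_num
  have hY : ((∫⁻ x in S, ‖u x‖ₑ ^ p) ^ (3 / (6 - p))) ^ ((6 - p) / (2 * p - 3))
      = LpS u p S ^ (3 * p / (2 * p - 3)) := by
    rw [LpS_eq_lintegral u h0, ← ENNReal.rpow_mul, ← ENNReal.rpow_mul]
    congr 1
    field_simp
  have hτq : ENNReal.ofReal ((t - s)⁻¹) ^ ((6 - p) / (2 * p - 3))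
      = ENNReal.ofReal ((t - s) ^ (-((6 - p) / (2 * p - 3)))) := by
    rw [ENNReal.ofReal_rpow_of_pos (inv_pos.2 hτ), Real.inv_rpow hτ.le, Real.rpow_neg hτ.le]
  rw [hcube]
  calc ENNReal.ofReal ((t - s)⁻¹) * ∫⁻ x in S, ‖u x‖ₑ ^ (3 : ℝ)
      ≤ ENNReal.ofReal ((t - s)⁻¹) * ((∫⁻ x in S, ‖u x‖ₑ ^ p) ^ (3 / (6 - p)) *
          (∫⁻ x in S, ‖u x‖ₑ ^ (6 : ℝ)) ^ ((3 - p) / (6 - p))) := by gcongr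
    _ = (∫⁻ x in S, ‖u x‖ₑ ^ (6 : ℝ)) ^ ((3 - p) / (6 - p)) *
          (ENNReal.ofReal ((t - s)⁻¹) * (∫⁻ x in S, ‖u x‖ₑ ^ p) ^ (3 / (6 - p))) := by ring
    _ ≤ _ := mul_le_weighted_young hrq hε _ _
    _ ≤ _ := by
        rw [hX, ENNReal.mul_rpow_of_nonneg _ _ hrq.symm.nonneg, hY, hτq, ← mul_assoc]
        gcongr
end
end

section
/- Let p ∈ (3/2, 9/2] and r ∈ [1, 2p') be real exponents, where p' = p/(p−1). For every R > 0, every s, t with 3R/2 ≤ s < t ≤ 2R, every smooth vector field u : ℝ³ → ℝ³ and every smooth function θ : ℝ³ → ℝ, the quantity J₄ = (t−s)^{−1} ∫_{B_t∖B_s} |θ − θ̄_R|² |u| dx satisfies J₄ ≤ (t−s)^{−1} ‖u‖_{L^p(B_t∖B_R)} ‖θ − θ̄_R‖_{L^r(B_t∖B_R)}^{2(3−p')r/((6−r)p')} ‖θ − θ̄_R‖_{L^6(B_t∖B_R)}^{(12p'−6r)/((6−r)p')} (the inequality interpreted in the extended nonnegative reals). -/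
/-!
The estimate is a single application of Hölder's inequality with three factors. Write `q = p / (p - 1)`
and `f = |θ - θ̄_R|`. With the weights
`1 / p`, `a = (6 - 2 q) / ((6 - r) q)` and `b = (2 q - r) / ((6 - r) q)`, one has `1 / p + a + b = 1`
and `r a + 6 b = 2`, so that pointwise `|u| f² = (|u|^p)^(1/p) (f^r)^a (f^6)^b`. Hölder then bounds
the integral by `‖u‖_p ‖f‖_r^(r a) ‖f‖_6^(6 b)`, and `r a`, `6 b` are the exponents in the claim.
The weights are nonnegative because `r < 2 q < 6`. Since `R ≤ s`, the integral over `B_t \ B_s` is at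
most the one over `B_t \ B_R`.
-/

open MeasureTheory Metric Filter
open scoped ENNReal NNReal

noncomputable section

/-- Three-factor Hölder inequality in interpolation form: the weights `1 / p`, `a`, `b` sum to one,
and `r * a + c * b = 2` makes the powers of `f` multiply to `f ^ 2`. -/
theorem lintegral_enorm_mul_sq_le {α F : Type*} [MeasurableSpace α] [NormedAddCommGroup F]
    (μ : Measure α) {u : α → F} {f : α → ℝ} (hu : AEStronglyMeasurable u μ)
    (hf : AEStronglyMeasurable f μ) {p r c a b : ℝ} (hp : 0 < p) (hr : 0 < r) (hc : 0 < c)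
    (ha : 0 ≤ a) (hb : 0 ≤ b) (hsum : 1 / p + a + b = 1) (hexp : r * a + c * b = 2) :
    ∫⁻ x, ENNReal.ofReal (f x ^ 2 * ‖u x‖) ∂μ ≤
      eLpNorm u (ENNReal.ofReal p) μ * eLpNorm f (ENNReal.ofReal r) μ ^ (r * a) *
        eLpNorm f (ENNReal.ofReal c) μ ^ (c * b) := by
  have key := ENNReal.lintegral_prod_norm_pow_le (μ := μ) Finset.univ
    (f := ![fun x => ‖u x‖ₑ ^ p, fun x => ‖f x‖ₑ ^ r, fun x => ‖f x‖ₑ ^ c])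
    (p := ![1 / p, a, b])
    (by
      intro i _
      fin_cases i
      · exact hu.enorm.pow_const _
      · exact hf.enorm.pow_const _
      · exact hf.enorm.pow_const _)
    (by simpa [Fin.sum_univ_three] using hsum)
    (by
      intro i _
      fin_cases i
      · exact (one_div_pos.2 hp).le
      · exact ha
      · exact hb)
  have norm_eq : ∀ {e w : ℝ}, 0 < e →
      eLpNorm f (ENNReal.ofReal e) μ ^ (e * w) = (∫⁻ x, ‖f x‖ₑ ^ e ∂μ) ^ w := by
    intro e w he
    rw [eLpNorm_eq_lintegral_rpow_enorm_toReal (by simpa using he) ENNReal.ofReal_ne_top,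
      ENNReal.toReal_ofReal he.le, ← ENNReal.rpow_mul]
    congr 1
    field_simp
  rw [norm_eq hr, norm_eq hc,
    eLpNorm_eq_lintegral_rpow_enorm_toReal (by simpa using hp) ENNReal.ofReal_ne_top,
    ENNReal.toReal_ofReal hp.le]
  simp only [Fin.prod_univ_three, Matrix.cons_val_zero, Matrix.cons_val_one, Matrix.cons_val] at key
  refine le_trans (le_of_eq (lintegral_congr fun x => ?_)) key
  rw [← ENNReal.rpow_mul, ← ENNReal.rpow_mul, ← ENNReal.rpow_mul, mul_one_div_cancel hp.ne',
    ENNReal.rpow_one, mul_assoc,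
    ← ENNReal.rpow_add_of_nonneg _ _ (mul_nonneg hr.le ha) (mul_nonneg hc.le hb), hexp,
    ENNReal.ofReal_mul (sq_nonneg _), ofReal_norm, ← sq_abs, ENNReal.ofReal_pow (abs_nonneg _),
    ← Real.norm_eq_abs, ofReal_norm, mul_comm]
  norm_cast

theorem J4_estimate_ii (p r : ℝ) (hp : 3 / 2 < p ∧ p ≤ 9 / 2)
    (hr : 1 ≤ r ∧ r < 2 * (p / (p - 1))) :
    ∀ R s t : ℝ, 0 < R → 3 * R / 2 ≤ s → s < t → t ≤ 2 * R →
    ∀ u : E3 → E3, ∀ θ : E3 → ℝ, ContDiff ℝ (⊤ : ℕ∞) u → ContDiff ℝ (⊤ : ℕ∞) θ →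
      ENNReal.ofReal ((t - s)⁻¹) *
          ∫⁻ x in ball (0 : E3) t \ ball (0 : E3) s,
            ENNReal.ofReal ((θ x - thetaBar θ R) ^ 2 * ‖u x‖)
      ≤ ENNReal.ofReal ((t - s)⁻¹) * LpS u p (ball (0 : E3) t \ ball (0 : E3) R) *
          LpS (fun x => θ x - thetaBar θ R) r (ball (0 : E3) t \ ball (0 : E3) R) ^ (2 * (3 - (p / (p - 1))) * r / ((6 - r) * (p / (p - 1)))) *
          LpS (fun x => θ x - thetaBar θ R) 6 (ball (0 : E3) t \ ball (0 : E3) R) ^ ((12 * (p / (p - 1)) - 6 * r) / ((6 - r) * (p / (p - 1)))) := by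
  intro R s t hR hs hst _ u θ hu hθ
  obtain ⟨hp1, -⟩ := hp
  obtain ⟨hr1, hr2⟩ := hr
  have hp0 : 0 < p := by linarith
  have hpm : 0 < p - 1 := by linarith
  have hpq : 1 / p + 1 / (p / (p - 1)) = 1 := by
    field_simp
    ring
  have hq0 : 0 < p / (p - 1) := div_pos hp0 hpm
  have hq3 : p / (p - 1) < 3 := by
    rw [div_lt_iff₀ hpm]
    linarith
  generalize p / (p - 1) = q at *
  have h6r : 0 < 6 - r := by linarith
  have hD : 0 < (6 - r) * q := mul_pos h6r hq0
  have hab : (6 - 2 * q) / ((6 - r) * q) + (2 * q - r) / ((6 - r) * q) = 1 / q := by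
    field_simp
    ring
  have key := lintegral_enorm_mul_sq_le
    (volume.restrict (ball (0 : E3) t \ ball (0 : E3) R)) (u := u)
    (f := fun x => θ x - thetaBar θ R) (p := p) (r := r) (c := 6)
    (a := (6 - 2 * q) / ((6 - r) * q)) (b := (2 * q - r) / ((6 - r) * q))
    hu.continuous.aestronglyMeasurable
    (hθ.continuous.sub continuous_const).aestronglyMeasurable
    hp0 (by linarith) (by norm_num)
    (div_nonneg (by linarith) hD.le) (div_nonneg (by linarith) hD.le)
    (by rw [add_assoc, hab, hpq])
    (by
      field_simp
      ring)
  have e1 : r * ((6 - 2 * q) / ((6 - r) * q)) = 2 * (3 - q) * r / ((6 - r) * q) := by ring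
  have e2 : 6 * ((2 * q - r) / ((6 - r) * q)) = (12 * q - 6 * r) / ((6 - r) * q) := by ring
  rw [e1, e2] at key
  have hmono : ∫⁻ x in ball (0 : E3) t \ ball (0 : E3) s,
      ENNReal.ofReal ((θ x - thetaBar θ R) ^ 2 * ‖u x‖) ≤
      ∫⁻ x in ball (0 : E3) t \ ball (0 : E3) R,
        ENNReal.ofReal ((θ x - thetaBar θ R) ^ 2 * ‖u x‖) :=
    lintegral_mono_set (Set.sdiff_subset_sdiff_right (ball_subset_ball (by linarith)))
  rw [mul_assoc, mul_assoc, ← mul_assoc (LpS u p _)]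
  exact mul_le_mul_right (hmono.trans key) _
end
end

section
/- Let q ∈ [1, 2) and r ∈ [2, 6] be real exponents. For every δ > 0 there exists a constant C_δ > 0 (depending only on δ, q, r) such that for every R > 0, every s, t with 3R/2 ≤ s < t ≤ 2R, every smooth vector field v : ℝ³ → ℝ³ and every smooth function θ : ℝ³ → ℝ, the quantity J₅ = (t−s)^{−1} ∫_{B_t∖B_s} |v| |θ − θ̄_R| dx satisfies J₅ ≤ δ ‖v‖²_{L^6(B_t∖B_R)} + C_δ (t−s)^{−2(6−q)/(6+q)} R^{3(r−2)(6−q)/(r(6+q))} ‖v‖_{L^q(B_{2R}∖B_R)}^{4q/(6+q)} ‖θ − θ̄_R‖_{L^r(B_{2R}∖B_R)}^{2(6−q)/(6+q)} (the inequality interpreted in the extended nonnegative reals). -/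
/-!
With `A = B_t \ B_s`, Cauchy–Schwarz bounds the integral by `‖v‖_{L²(A)} ‖θ - θ̄‖_{L²(A)}`.
The first factor is interpolated between `L⁶` and `L^q` with weight `a = 3(2-q)/(6-q)` on `L⁶`
(`eLpNorm_two_interp`); the second is bounded by `|B_{2R} \ B_R|^{1/2-1/r}` times the `L^r` norm,
with `|B_{2R} \ B_R| ≤ 8 |B_1| R³` (`volume_Ann_le`). Young's inequality with the conjugate
exponents `2/a` and `2(6-q)/(6+q)`, weighted by `δ^{a/2}`, then splits off `δ ‖v‖²_{L⁶}`
(`young_absorb`); since `q < 2`, `a > 0` and the exponent `2/a` is finite.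
-/


open MeasureTheory Metric Filter
open scoped ENNReal NNReal

noncomputable section

/-- Cauchy–Schwarz in the form needed for the integrand of `J₅`. -/
lemma lintegral_norm_mul_le {μ : Measure E3} {v : E3 → E3} {g : E3 → ℝ}
    (hv : Continuous v) (hg : Continuous g) :
    ∫⁻ x, ENNReal.ofReal (‖v x‖ * |g x|) ∂μ ≤ eLpNorm v 2 μ * eLpNorm g 2 μ := by
  have h := ENNReal.lintegral_mul_le_Lp_mul_Lq μ Real.HolderConjugate.two_two
    (f := fun x => ‖v x‖ₑ) (g := fun x => ‖g x‖ₑ)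
    hv.enorm.measurable.aemeasurable hg.enorm.measurable.aemeasurable
  rw [eLpNorm_eq_lintegral_rpow_enorm_toReal (by norm_num) (by norm_num),
    eLpNorm_eq_lintegral_rpow_enorm_toReal (by norm_num) (by norm_num)]
  simp only [ENNReal.toReal_ofNat]
  refine le_trans (le_of_eq ?_) h
  refine lintegral_congr fun x => ?_
  rw [ENNReal.ofReal_mul (norm_nonneg _), ofReal_norm, ← Real.norm_eq_abs, ofReal_norm]
  rfl

/-- Interpolation of `L²` between `L⁶` and `L^q`, with weights `3(2-q)/(6-q)` and `2q/(6-q)`. -/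
lemma eLpNorm_two_interp {μ : Measure E3} {v : E3 → E3} (hv : Continuous v) {q : ℝ}
    (hq1 : 1 ≤ q) (hq2 : q < 2) :
    eLpNorm v 2 μ ≤ eLpNorm v (ENNReal.ofReal 6) μ ^ (3 * (2 - q) / (6 - q)) *
      eLpNorm v (ENNReal.ofReal q) μ ^ (2 * q / (6 - q)) := by
  have hq0 : 0 < q := by linarith
  have h6 : 0 < 6 - q := by linarith
  have h2 : 0 < 2 - q := by linarith
  have hm : Measurable fun x => ‖v x‖ₑ := hv.enorm.measurable
  have h := ENNReal.lintegral_mul_norm_pow_le (μ := μ)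
    (f := fun x => ‖v x‖ₑ ^ (6 : ℝ)) (g := fun x => ‖v x‖ₑ ^ q)
    (hm.pow_const _).aemeasurable (hm.pow_const _).aemeasurable
    (p := (2 - q) / (6 - q)) (q := 4 / (6 - q)) (by positivity) (by positivity)
    (by field_simp; ring)
  have he : ∀ x, (‖v x‖ₑ ^ (6 : ℝ)) ^ ((2 - q) / (6 - q)) * (‖v x‖ₑ ^ q) ^ (4 / (6 - q))
      = ‖v x‖ₑ ^ (2 : ℝ) := by
    intro x
    rw [← ENNReal.rpow_mul, ← ENNReal.rpow_mul,
      ← ENNReal.rpow_add_of_nonneg _ _ (by positivity) (by positivity)]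
    congr 1
    field_simp
    ring
  simp only [he] at h
  rw [eLpNorm_eq_lintegral_rpow_enorm_toReal (by norm_num) (by norm_num),
    eLpNorm_eq_lintegral_rpow_enorm_toReal (by norm_num) (by norm_num),
    eLpNorm_eq_lintegral_rpow_enorm_toReal (by simpa using hq0) ENNReal.ofReal_ne_top]
  rw [ENNReal.toReal_ofReal hq0.le, ENNReal.toReal_ofReal (by norm_num), ENNReal.toReal_ofNat]
  refine (ENNReal.rpow_le_rpow h (by norm_num : (0 : ℝ) ≤ 1 / 2)).trans (le_of_eq ?_)
  rw [ENNReal.mul_rpow_of_nonneg _ _ (by norm_num)]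
  simp only [← ENNReal.rpow_mul]
  congr 2 <;> field_simp <;> ring

lemma volume_Ann_le {R : ℝ} (hR : 0 < R) :
    volume (Ann R) ≤
      ENNReal.ofReal (8 * (volume (ball (0 : E3) 1)).toReal * R ^ 3) := by
  refine (measure_mono Set.sdiff_subset).trans (le_of_eq ?_)
  rw [Measure.addHaar_ball_of_pos _ _ (by positivity : 0 < 2 * R)]
  rw [← ENNReal.ofReal_toReal (measure_ball_lt_top (μ := volume) (x := (0 : E3)) (r := 1)).ne,
    ← ENNReal.ofReal_mul (by positivity)]
  congr 1
  simp
  ring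

/-- Young's inequality with exponents `2/a` and `2/(2-a)`, the first factor being absorbed with
the small constant `δ`. -/
lemma young_absorb {a δ : ℝ} (ha0 : 0 < a) (ha2 : a < 2) (hδ : 0 < δ) (W X : ℝ≥0∞) :
    W ^ a * X ≤ ENNReal.ofReal δ * W ^ 2 +
      (ENNReal.ofReal (δ ^ (-(a / 2))) * X) ^ (2 / (2 - a)) := by
  have hb : 0 < 2 - a := by linarith
  have hpq : (2 / a).HolderConjugate (2 / (2 - a)) := by
    rw [Real.holderConjugate_iff]
    refine ⟨by rw [lt_div_iff₀ ha0]; linarith, ?_⟩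
    field_simp
    ring
  have h := ENNReal.young_inequality (ENNReal.ofReal (δ ^ (a / 2)) * W ^ a)
    (ENNReal.ofReal (δ ^ (-(a / 2))) * X) hpq
  have h1 : ENNReal.ofReal (δ ^ (a / 2)) * W ^ a * (ENNReal.ofReal (δ ^ (-(a / 2))) * X)
      = W ^ a * X := by
    have : ENNReal.ofReal (δ ^ (a / 2)) * ENNReal.ofReal (δ ^ (-(a / 2))) = 1 := by
      rw [← ENNReal.ofReal_mul (by positivity), ← Real.rpow_add hδ]
      simp
    rw [mul_mul_mul_comm, this, one_mul]
  have h2 : (ENNReal.ofReal (δ ^ (a / 2)) * W ^ a) ^ (2 / a) = ENNReal.ofReal δ * W ^ 2 := by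
    rw [ENNReal.mul_rpow_of_nonneg _ _ (by positivity),
      ENNReal.ofReal_rpow_of_nonneg (by positivity) (by positivity), ← Real.rpow_mul hδ.le,
      ← ENNReal.rpow_mul, ← ENNReal.rpow_natCast]
    congr 2
    · rw [show a / 2 * (2 / a) = 1 by field_simp, Real.rpow_one]
    · push_cast
      field_simp
  rw [h1, h2] at h
  -- both exponents are at least 1, so the divisions in Young's inequality can be dropped
  have hdiv : ∀ (y : ℝ≥0∞) {p : ℝ}, 1 < p → y / ENNReal.ofReal p ≤ y := fun y p hp =>
    ENNReal.div_le_of_le_mul (le_mul_of_one_le_right' (by simpa using hp.le))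
  exact h.trans (add_le_add (hdiv _ hpq.lt) (hdiv _ hpq.symm.lt))

theorem J5_estimate_iii (q r : ℝ) (hq : 1 ≤ q ∧ q < 2) (hr : 2 ≤ r ∧ r ≤ 6) :
    ∀ δ : ℝ, 0 < δ → ∃ Cδ : ℝ, 0 < Cδ ∧
      ∀ R s t : ℝ, 0 < R → 3 * R / 2 ≤ s → s < t → t ≤ 2 * R →
      ∀ v : E3 → E3, ∀ θ : E3 → ℝ, ContDiff ℝ (⊤ : ℕ∞) v → ContDiff ℝ (⊤ : ℕ∞) θ →
        ENNReal.ofReal ((t - s)⁻¹) *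
          ∫⁻ x in ball (0 : E3) t \ ball (0 : E3) s,
            ENNReal.ofReal (‖v x‖ * |θ x - thetaBar θ R|)
        ≤ ENNReal.ofReal δ * LpS v 6 (ball (0 : E3) t \ ball (0 : E3) R) ^ 2
          + ENNReal.ofReal Cδ * ENNReal.ofReal ((t - s) ^ (-(2 * (6 - q) / (6 + q)))) *
              ENNReal.ofReal (R ^ (3 * (r - 2) * (6 - q) / (r * (6 + q)))) *
              LpS v q (Ann R) ^ (4 * q / (6 + q)) *
              LpS (fun x => θ x - thetaBar θ R) r (Ann R) ^ (2 * (6 - q) / (6 + q)) := by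
  obtain ⟨hq1, hq2⟩ := hq
  obtain ⟨hr1, hr2⟩ := hr
  intro δ hδ
  have hq0 : 0 < q := by linarith
  have h6 : 0 < 6 - q := by linarith
  have h6' : 0 < 6 + q := by linarith
  have h2 : 0 < 2 - q := by linarith
  have hr0 : 0 < r := by linarith
  set K : ℝ := 8 * (volume (ball (0 : E3) 1)).toReal with hK
  have hK0 : 0 < K := by
    have := ENNReal.toReal_pos (measure_ball_pos volume (0 : E3) one_pos).ne'
      measure_ball_lt_top.ne
    positivity
  set a : ℝ := 3 * (2 - q) / (6 - q) with ha
  have ha0 : 0 < a := by positivity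
  have ha2 : a < 2 := by rw [ha, div_lt_iff₀ h6]; linarith
  have hp' : 2 / (2 - a) = 2 * (6 - q) / (6 + q) := by
    have : 2 - a = (6 + q) / (6 - q) := by rw [ha]; field_simp; ring
    rw [this]
    field_simp
  set P : ℝ := 2 * (6 - q) / (6 + q) with hP
  have hP0 : 0 < P := by positivity
  set e : ℝ := 1 / 2 - 1 / r with he
  have he0 : 0 ≤ e := by
    rw [he, sub_nonneg]
    exact one_div_le_one_div_of_le (by norm_num) hr1
  refine ⟨(δ ^ (-(a / 2)) * K ^ e) ^ P, by positivity, ?_⟩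
  intro R s t hR hs hst ht v θ hv hθ
  have hts : 0 < t - s := by linarith
  have hvc : Continuous v := hv.continuous
  have hgc : Continuous fun x => θ x - thetaBar θ R := hθ.continuous.sub continuous_const
  set g : E3 → ℝ := fun x => θ x - thetaBar θ R with hg
  set A : Set E3 := ball (0 : E3) t \ ball (0 : E3) s with hA
  have hA6 : A ⊆ ball (0 : E3) t \ ball (0 : E3) R :=
    Set.sdiff_subset_sdiff_right (ball_subset_ball (by linarith))
  have hAA : A ⊆ Ann R := hA6.trans (Set.sdiff_subset_sdiff_left (ball_subset_ball ht))
  set W := LpS v 6 (ball (0 : E3) t \ ball (0 : E3) R) with hW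
  set Y := LpS v q (Ann R) with hY
  set Z := LpS g r (Ann R) with hZ
  have hV : eLpNorm v 2 (volume.restrict A) ≤ W ^ a * Y ^ (2 * q / (6 - q)) := by
    refine (eLpNorm_two_interp hvc hq1 hq2).trans ?_
    exact mul_le_mul' (ENNReal.rpow_le_rpow
      (eLpNorm_mono_measure _ (Measure.restrict_mono hA6 le_rfl)) ha0.le)
      (ENNReal.rpow_le_rpow
      (eLpNorm_mono_measure _ (Measure.restrict_mono hAA le_rfl)) (by positivity))
  have hT : eLpNorm g 2 (volume.restrict A) ≤ Z * ENNReal.ofReal ((K * R ^ 3) ^ e) := by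
    refine (eLpNorm_mono_measure _ (Measure.restrict_mono hAA le_rfl)).trans ?_
    have h2r : (2 : ℝ≥0∞) ≤ ENNReal.ofReal r := by
      rw [← ENNReal.ofReal_ofNat]
      exact ENNReal.ofReal_le_ofReal hr1
    refine (eLpNorm_le_eLpNorm_mul_rpow_measure_univ h2r hgc.aestronglyMeasurable).trans ?_
    rw [ENNReal.toReal_ofReal hr0.le, ENNReal.toReal_ofNat, Measure.restrict_apply_univ,
      ← ENNReal.ofReal_rpow_of_nonneg (by positivity) he0]
    exact mul_le_mul' le_rfl (ENNReal.rpow_le_rpow (volume_Ann_le hR) he0)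
  have hmain : ENNReal.ofReal ((t - s)⁻¹) *
      ∫⁻ x in A, ENNReal.ofReal (‖v x‖ * |θ x - thetaBar θ R|) ≤
      W ^ a * (ENNReal.ofReal ((t - s)⁻¹ * (K * R ^ 3) ^ e) * Y ^ (2 * q / (6 - q)) * Z) := by
    calc _ ≤ ENNReal.ofReal ((t - s)⁻¹) * ((W ^ a * Y ^ (2 * q / (6 - q))) *
          (Z * ENNReal.ofReal ((K * R ^ 3) ^ e))) := by
          refine mul_le_mul' le_rfl ((lintegral_norm_mul_le hvc hgc).trans ?_)
          exact mul_le_mul' hV hT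
      _ = _ := by
          rw [ENNReal.ofReal_mul (by positivity)]
          ring
  refine hmain.trans ((young_absorb ha0 ha2 hδ W _).trans (le_of_eq ?_))
  congr 1
  rw [hp', ← mul_assoc, ← mul_assoc, ← ENNReal.ofReal_mul (by positivity),
    ENNReal.mul_rpow_of_nonneg _ _ hP0.le, ENNReal.mul_rpow_of_nonneg _ _ hP0.le,
    ← ENNReal.rpow_mul, ENNReal.ofReal_rpow_of_nonneg (by positivity) hP0.le,
    ← ENNReal.ofReal_mul (by positivity), ← ENNReal.ofReal_mul (by positivity)]
  congr 3
  · have hRe : R ^ (3 * (r - 2) * (6 - q) / (r * (6 + q))) = ((R ^ 3) ^ e) ^ P := by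
      rw [← Real.rpow_natCast, ← Real.rpow_mul hR.le, ← Real.rpow_mul hR.le]
      congr 1
      rw [he, hP]
      push_cast
      field_simp
    have hte : (t - s) ^ (-P) = ((t - s)⁻¹) ^ P := by
      rw [Real.rpow_neg hts.le, Real.inv_rpow hts.le]
    have hKR : (K * R ^ 3) ^ e = K ^ e * (R ^ 3) ^ e :=
      Real.mul_rpow hK0.le (by positivity)
    rw [hRe, hte, ← Real.mul_rpow (by positivity) (by positivity),
      ← Real.mul_rpow (by positivity) (by positivity), hKR]
    congr 1
    ring
  · rw [hP]
    field_simp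
    ring
end
end
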